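/- Let σ be a REC-social welfare function satisfying unanimity and independence (on REC-measurable profiles), where X has at least 3 elements, and let U be an ultrafilter on the Boolean algebra REC that is decisive for σ. Then σ is dictatorial (on REC-measurable profiles) if and only if σ satisfies DDC with respect to U, i.e. the partial function β_σ has an extension to a partial recursive function. -/

import Mathlib

/-- A weak order: asymmetric and negatively transitive. -/
def IsWeakPref {X : Type*} (P : X → X → Prop) : Prop :=
  (∀ x y : X, P x y → ¬ P y x) ∧ ∀ x y z : X, ¬ P x y → ¬ P y z → ¬ P x z

/-- A profile assigns a weak order on the alternatives to each voter in `ℕ`. -/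
def IsProf {X : Type*} (f : ℕ → X → X → Prop) : Prop := ∀ v : ℕ, IsWeakPref (f v)

/-- A set of naturals is computable if its membership predicate is computable. -/
def ComputableSet (A : Set ℕ) : Prop := ComputablePred (· ∈ A)

/-- A profile is REC-measurable if each of its preference coalitions is computable. -/
def RECMeasurable {X : Type*} (f : ℕ → X → X → Prop) : Prop :=
  ∀ a b : X, ComputableSet {v : ℕ | f v a b}

/-- The Gödel numbering of partial recursive functions via `Nat.Partrec.Code`. -/
def phi (e : ℕ) : ℕ →. ℕ := (Denumerable.ofNat Nat.Partrec.Code e).eval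

/-- `e` indexes `A` if `φ_e` is the characteristic function of `A`. -/
def Indexes (e : ℕ) (A : Set ℕ) : Prop :=
  ∀ n : ℕ, (n ∈ A → phi e n = Part.some 1) ∧ (n ∉ A → phi e n = Part.some 0)

/-- The set of Gödel codes of characteristic functions of computable sets. -/
def RecSet : Set ℕ := {e : ℕ | ∃ A : Set ℕ, ComputableSet A ∧ Indexes e A}

/-- A set of naturals is r.e. if it is the domain of a partial recursive function. -/
def REset (A : Set ℕ) : Prop :=
  ∃ g : ℕ →. ℕ, Partrec g ∧ ∀ n : ℕ, n ∈ A ↔ (g n).Dom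

/-- A REC-measurable profile (its restriction is what a REC-social welfare
function is defined on). -/
def GoodProfile {X : Type*} (f : ℕ → X → X → Prop) : Prop :=
  IsProf f ∧ RECMeasurable f

/-- Unanimity, on REC-measurable profiles. -/
def Unanimity {X : Type*} (σ : (ℕ → X → X → Prop) → X → X → Prop) : Prop :=
  ∀ (x y : X) (f : ℕ → X → X → Prop), GoodProfile f → (∀ v : ℕ, f v x y) → σ f x y

/-- Independence, on REC-measurable profiles. -/
def Independence {X : Type*} (σ : (ℕ → X → X → Prop) → X → X → Prop) : Prop :=
  ∀ (x y : X) (f g : ℕ → X → X → Prop), GoodProfile f → GoodProfile g →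
    (∀ v : ℕ, (f v x y ↔ g v x y) ∧ (f v y x ↔ g v y x)) →
    ((σ f x y ↔ σ g x y) ∧ (σ f y x ↔ σ g y x))

/-- Dictatorship, on REC-measurable profiles. -/
def Dictatorial {X : Type*} (σ : (ℕ → X → X → Prop) → X → X → Prop) : Prop :=
  ∃ v0 : ℕ, ∀ (x y : X) (f : ℕ → X → X → Prop), GoodProfile f → f v0 x y → σ f x y

/-- An ultrafilter on the Boolean algebra REC of computable subsets of `ℕ`. -/
def RECUltrafilter (𝒰 : Set (Set ℕ)) : Prop :=
  (∀ A ∈ 𝒰, ComputableSet A) ∧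
  (∀ A B : Set ℕ, A ∈ 𝒰 → ComputableSet B → A ⊆ B → B ∈ 𝒰) ∧
  (∀ A B : Set ℕ, A ∈ 𝒰 → B ∈ 𝒰 → A ∩ B ∈ 𝒰) ∧
  (∅ : Set ℕ) ∉ 𝒰 ∧
  ∀ A : Set ℕ, ComputableSet A → Xor' (A ∈ 𝒰) (Aᶜ ∈ 𝒰)

/-- `𝒰` is decisive for `σ`: coalitions in `𝒰` decide the verdict. -/
def Decisive {X : Type*} (σ : (ℕ → X → X → Prop) → X → X → Prop)
    (𝒰 : Set (Set ℕ)) : Prop :=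
  ∀ U ∈ 𝒰, ∀ (x y : X) (f : ℕ → X → X → Prop), GoodProfile f →
    (∀ v ∈ U, f v x y) → σ f x y

/-- Pairwise computability: for each ordered pair of distinct alternatives there
is a partial recursive function deciding the verdict from any code of the
restricted profile. -/
def PairwiseComputable {X : Type*}
    (σ : (ℕ → X → X → Prop) → X → X → Prop) : Prop :=
  ∀ x y : X, x ≠ y → ∃ γ : ℕ →. ℕ, Partrec γ ∧
    ∀ f : ℕ → X → X → Prop, GoodProfile f → ∀ e1 e2 e3 : ℕ,
      Indexes e1 {v : ℕ | f v x y} → Indexes e2 {v : ℕ | f v y x} →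
      Indexes e3 {v : ℕ | ¬ f v x y ∧ ¬ f v y x} →
      (σ f x y → γ (Nat.pair e1 (Nat.pair e2 e3)) = Part.some 1) ∧
      (¬ σ f x y → γ (Nat.pair e1 (Nat.pair e2 e3)) = Part.some 0)

/-- Decidability of Decisive Coalitions w.r.t. `𝒰`: the partial function `β_σ`
(deciding membership in `𝒰` from indices of computable sets) extends to a
partial recursive function. -/
def DDC (𝒰 : Set (Set ℕ)) : Prop :=
  ∃ g : ℕ →. ℕ, Partrec g ∧ ∀ (e : ℕ) (A : Set ℕ), ComputableSet A → Indexes e A →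
    (A ∈ 𝒰 → g e = Part.some 1) ∧ (A ∉ 𝒰 → g e = Part.some 0)

/-!
Both sides say that `𝒰` is principal. A dictator `v` belongs to every `A ∈ 𝒰`: otherwise the voters
in `A` and the voter `v` can hold opposite preferences on a pair, and both would prevail. Hence
`{v}ᶜ ∉ 𝒰`, that is, `{v} ∈ 𝒰`; and a decisive singleton is a dictator.

If `{v} ∈ 𝒰`, then membership in `𝒰` of the set indexed by `e` is decided by computing `φ_e(v)`.
Conversely, suppose that `g` decides membership in `𝒰` from indices. By the recursion theorem there
is an index `e` of the set `A` of those `n` for which the computation of `g e` outputs `0` within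
`n` steps. This set is empty if `g e` claims `A ∈ 𝒰`, and cofinite if it claims `A ∉ 𝒰`, so a free
`𝒰` refutes `g` at `e`.
-/

open Nat.Partrec (Code)

theorem ComputableSet.compl {A : Set ℕ} (hA : ComputableSet A) : ComputableSet Aᶜ :=
  ComputablePred.not hA

theorem ComputableSet.singleton (k : ℕ) : ComputableSet {k} :=
  (Primrec.eq.comp Primrec.id (Primrec.const k)).computablePred

theorem ComputableSet.empty : ComputableSet ∅ :=
  ComputablePred.computable_iff.2 ⟨fun _ => false, Computable.const false, by ext; simp⟩

theorem partrec₂_phi : Partrec₂ phi :=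
  Code.eval_part.comp ((Computable.ofNat Code).comp Computable.fst) Computable.snd

/-- Kleene's second recursion theorem for sets: the membership condition may mention the index. -/
theorem exists_indexes_setOf {R : ℕ → ℕ → Prop}
    (hR : ComputablePred fun p : ℕ × ℕ => R p.1 p.2) :
    ∃ e, Indexes e {n | R e n} := by
  classical
  let χ : Code → ℕ → ℕ := fun c n => if R (Encodable.encode c) n then 1 else 0
  have hχ : Computable₂ χ := by
    have hdecide : Computable fun p : Code × ℕ => decide (R (Encodable.encode p.1) p.2) :=
      hR.decide.comp ((Computable.encode.comp Computable.fst).pair Computable.snd)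
    exact (Computable.cond hdecide (Computable.const 1) (Computable.const 0)).of_eq
      fun p => by simp [χ, Bool.cond_decide]
  obtain ⟨c, hc⟩ := Code.fixed_point₂ hχ.partrec₂
  refine ⟨Encodable.encode c, fun n => ?_⟩
  have hphi : phi (Encodable.encode c) n = Part.some (χ c n) := by simp [phi, hc]
  exact ⟨fun hn => hphi.trans (congrArg Part.some (if_pos hn)),
    fun hn => hphi.trans (congrArg Part.some (if_neg hn))⟩

theorem exists_indexes_isUpperSet_nonempty_iff {g : ℕ →. ℕ} (hg : Partrec g) (m : ℕ) :
    ∃ e A, ComputableSet A ∧ Indexes e A ∧ IsUpperSet A ∧ (A.Nonempty ↔ m ∈ g e) := by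
  obtain ⟨c, rfl⟩ := Code.exists_code.1 (Partrec.nat_iff.1 hg)
  have hevaln : PrimrecRel fun e n => c.evaln n e = some m :=
    Primrec.eq.comp
      (Code.primrec_evaln.comp ((Primrec.snd.pair (Primrec.const c)).pair Primrec.fst))
      (Primrec.const (some m))
  obtain ⟨e, he⟩ := exists_indexes_setOf (R := fun e n => c.evaln n e = some m)
    hevaln.computablePred
  refine ⟨e, {n | c.evaln n e = some m}, ?_, he, ?_, ?_⟩
  · exact (hevaln.comp (Primrec.const e) Primrec.id).computablePred
  · exact fun _ _ hkn hk => Code.evaln_mono hkn hk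
  · exact Code.evaln_complete.symm

namespace RECUltrafilter

variable {𝒰 : Set (Set ℕ)} {A B : Set ℕ} {v : ℕ}

theorem computableSet (h𝒰 : RECUltrafilter 𝒰) (hA : A ∈ 𝒰) : ComputableSet A :=
  h𝒰.1 A hA

theorem mem_of_subset (h𝒰 : RECUltrafilter 𝒰) (hA : A ∈ 𝒰) (hB : ComputableSet B)
    (hAB : A ⊆ B) : B ∈ 𝒰 :=
  h𝒰.2.1 A B hA hB hAB

theorem inter_mem (h𝒰 : RECUltrafilter 𝒰) (hA : A ∈ 𝒰) (hB : B ∈ 𝒰) : A ∩ B ∈ 𝒰 :=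
  h𝒰.2.2.1 A B hA hB

theorem nonempty_of_mem (h𝒰 : RECUltrafilter 𝒰) (hA : A ∈ 𝒰) : A.Nonempty :=
  Set.nonempty_iff_ne_empty.2 fun h => h𝒰.2.2.2.1 (h ▸ hA)

theorem compl_mem_iff_notMem (h𝒰 : RECUltrafilter 𝒰) (hA : ComputableSet A) :
    Aᶜ ∈ 𝒰 ↔ A ∉ 𝒰 :=
  (xor_iff_not_iff'.1 (h𝒰.2.2.2.2 A hA)).symm

theorem univ_mem (h𝒰 : RECUltrafilter 𝒰) : Set.univ ∈ 𝒰 := by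
  rw [← Set.compl_empty, h𝒰.compl_mem_iff_notMem ComputableSet.empty]
  exact h𝒰.2.2.2.1

theorem mem_iff_of_singleton_mem (h𝒰 : RECUltrafilter 𝒰) (hv : {v} ∈ 𝒰)
    (hA : ComputableSet A) : A ∈ 𝒰 ↔ v ∈ A := by
  refine ⟨fun hAmem => ?_, fun hvA => h𝒰.mem_of_subset hv hA (Set.singleton_subset_iff.2 hvA)⟩
  exact Set.singleton_inter_nonempty.1 (h𝒰.nonempty_of_mem (h𝒰.inter_mem hv hAmem))

theorem Ici_mem (h𝒰 : RECUltrafilter 𝒰) (hfree : ∀ v, {v} ∉ 𝒰) (k : ℕ) : Set.Ici k ∈ 𝒰 := by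
  induction k with
  | zero => exact Set.Ici_bot (α := ℕ) ▸ h𝒰.univ_mem
  | succ k ih =>
    have hk : {k}ᶜ ∈ 𝒰 :=
      (h𝒰.compl_mem_iff_notMem (ComputableSet.singleton k)).2 (hfree k)
    have hIci : Set.Ici (k + 1) = Set.Ici k ∩ {k}ᶜ := by
      ext n
      simp only [Set.mem_Ici, Set.mem_inter_iff, Set.mem_compl_singleton_iff]
      omega
    exact hIci ▸ h𝒰.inter_mem ih hk

theorem mem_iff_nonempty_of_isUpperSet (h𝒰 : RECUltrafilter 𝒰) (hfree : ∀ v, {v} ∉ 𝒰)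
    (hA : ComputableSet A) (hupper : IsUpperSet A) : A ∈ 𝒰 ↔ A.Nonempty := by
  refine ⟨h𝒰.nonempty_of_mem, fun ⟨k, hk⟩ => ?_⟩
  exact h𝒰.mem_of_subset (h𝒰.Ici_mem hfree k) hA (hupper.Ici_subset hk)

theorem ddc_of_singleton_mem (h𝒰 : RECUltrafilter 𝒰) (hv : {v} ∈ 𝒰) : DDC 𝒰 := by
  refine ⟨fun e => phi e v, partrec₂_phi.comp Computable.id (Computable.const v), ?_⟩
  intro e A hA he
  rw [h𝒰.mem_iff_of_singleton_mem hv hA]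
  exact he v

theorem exists_singleton_mem_of_ddc (h𝒰 : RECUltrafilter 𝒰) (hddc : DDC 𝒰) :
    ∃ v, {v} ∈ 𝒰 := by
  by_contra! hfree
  obtain ⟨g, hg, hdecides⟩ := hddc
  obtain ⟨e, A, hA, he, hupper, hnonempty⟩ := exists_indexes_isUpperSet_nonempty_iff hg 0
  obtain ⟨hone, hzero⟩ := hdecides e A hA he
  have hmem : A ∈ 𝒰 ↔ 0 ∈ g e :=
    (h𝒰.mem_iff_nonempty_of_isUpperSet hfree hA hupper).trans hnonempty
  have hnotMem : A ∉ 𝒰 ↔ 0 ∈ g e :=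
    ⟨fun h => by simp [hzero h], fun h hAmem => by simp [hone hAmem] at h⟩
  exact iff_not_self (hmem.trans hnotMem.symm)

theorem ddc_iff_exists_singleton_mem (h𝒰 : RECUltrafilter 𝒰) :
    DDC 𝒰 ↔ ∃ v, {v} ∈ 𝒰 :=
  ⟨h𝒰.exists_singleton_mem_of_ddc, fun ⟨_, hv⟩ => h𝒰.ddc_of_singleton_mem hv⟩

end RECUltrafilter

section SocialWelfare

variable {X : Type*}

/-- The profile in which `a` is the unique worst alternative for the voters in `A`, the unique best
one for all other voters, and every voter is indifferent among the alternatives other than `a`. -/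
def polarizedProfile (A : Set ℕ) (a : X) (v : ℕ) (x y : X) : Prop :=
  (v ∈ A ∧ x = a ∧ y ≠ a) ∨ (v ∉ A ∧ x ≠ a ∧ y = a)

theorem isProf_polarizedProfile (A : Set ℕ) (a : X) : IsProf (polarizedProfile A a) := by
  refine fun v => ⟨fun x y => ?_, fun x y z => ?_⟩ <;>
    · simp only [polarizedProfile]
      tauto

theorem recMeasurable_polarizedProfile {A : Set ℕ} (hA : ComputableSet A) (a : X) :
    RECMeasurable (polarizedProfile A a) := by
  intro x y
  by_cases hx : x = a <;> by_cases hy : y = a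
  · simpa [polarizedProfile, hx, hy] using ComputableSet.empty
  · simpa [polarizedProfile, hx, hy] using hA
  · simpa [polarizedProfile, hx, hy] using! hA.compl
  · simpa [polarizedProfile, hx, hy] using ComputableSet.empty

theorem goodProfile_polarizedProfile {A : Set ℕ} (hA : ComputableSet A) (a : X) :
    GoodProfile (polarizedProfile A a) :=
  ⟨isProf_polarizedProfile A a, recMeasurable_polarizedProfile hA a⟩

/-- Voter `v` is a dictator for `σ`; `Dictatorial σ` says that some voter is one. -/
def IsDictator (σ : (ℕ → X → X → Prop) → X → X → Prop) (v : ℕ) : Prop :=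
  ∀ (x y : X) (f : ℕ → X → X → Prop), GoodProfile f → f v x y → σ f x y

variable {σ : (ℕ → X → X → Prop) → X → X → Prop} {𝒰 : Set (Set ℕ)}

theorem Decisive.isDictator {v : ℕ} (hD : Decisive σ 𝒰) (hv : {v} ∈ 𝒰) : IsDictator σ v :=
  fun x y f hf hxy => hD {v} hv x y f hf (by rintro _ rfl; exact hxy)

theorem IsDictator.mem_of_decisive [Nontrivial X] {v : ℕ} {A : Set ℕ} (hv : IsDictator σ v)
    (hasymm : ∀ f, GoodProfile f → ∀ x y, σ f x y → ¬ σ f y x)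
    (h𝒰 : RECUltrafilter 𝒰) (hD : Decisive σ 𝒰) (hA : A ∈ 𝒰) : v ∈ A := by
  by_contra hvA
  obtain ⟨a, b, hab⟩ := exists_pair_ne X
  have hgood := goodProfile_polarizedProfile (h𝒰.computableSet hA) a
  have hcoalition : σ (polarizedProfile A a) a b :=
    hD A hA a b _ hgood fun w hw => Or.inl ⟨hw, rfl, hab.symm⟩
  have hdictator : σ (polarizedProfile A a) b a :=
    hv b a _ hgood (Or.inr ⟨hvA, hab.symm, rfl⟩)
  exact hasymm _ hgood a b hcoalition hdictator

theorem isDictator_iff_singleton_mem [Nontrivial X] {v : ℕ}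
    (hasymm : ∀ f, GoodProfile f → ∀ x y, σ f x y → ¬ σ f y x)
    (h𝒰 : RECUltrafilter 𝒰) (hD : Decisive σ 𝒰) : IsDictator σ v ↔ {v} ∈ 𝒰 := by
  refine ⟨fun hv => ?_, hD.isDictator⟩
  by_contra hsingleton
  have hcompl : {v}ᶜ ∈ 𝒰 :=
    (h𝒰.compl_mem_iff_notMem (ComputableSet.singleton v)).2 hsingleton
  exact hv.mem_of_decisive hasymm h𝒰 hD hcompl rfl

theorem dictatorial_iff_ddc_general [Nontrivial X]
    (hasymm : ∀ f, GoodProfile f → ∀ x y, σ f x y → ¬ σ f y x)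
    (h𝒰 : RECUltrafilter 𝒰) (hD : Decisive σ 𝒰) : Dictatorial σ ↔ DDC 𝒰 :=
  calc Dictatorial σ
    _ ↔ ∃ v, IsDictator σ v := Iff.rfl
    _ ↔ ∃ v, {v} ∈ 𝒰 := exists_congr fun _ => isDictator_iff_singleton_mem hasymm h𝒰 hD
    _ ↔ DDC 𝒰 := h𝒰.ddc_iff_exists_singleton_mem.symm

end SocialWelfare

/-- a REC-social welfare function with decisive REC-ultrafilter `𝒰`
is dictatorial iff it satisfies DDC w.r.t. `𝒰`. -/
theorem dictatorial_iff_ddc {X : Type*}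
    (hX : ∃ a b c : X, a ≠ b ∧ a ≠ c ∧ b ≠ c)
    (σ : (ℕ → X → X → Prop) → X → X → Prop)
    (hW : ∀ f : ℕ → X → X → Prop, GoodProfile f → IsWeakPref (σ f))
    (hU : Unanimity σ) (hI : Independence σ)
    (𝒰 : Set (Set ℕ)) (h𝒰 : RECUltrafilter 𝒰) (hD : Decisive σ 𝒰) :
    Dictatorial σ ↔ DDC 𝒰 := by
  obtain ⟨a, b, _, hab, _⟩ := hX
  have : Nontrivial X := ⟨a, b, hab⟩
  exact dictatorial_iff_ddc_general (fun f hf => (hW f hf).1) h𝒰 hD
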